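/- arXiv:2006.04064 — 2 statements merged into one kernel-verified Lean document; each statement's English description precedes it below -/
import Mathlib

section
/- Let n, f, g be positive integers, let A be an n×n real matrix, z ∈ ℝ^n, H an n×f real matrix, and W an f×g real matrix, and let J_n denote the n×n all-ones matrix. Then A ⊙ (J_n · diag(z)) = A · diag(z), and consequently ∑_{i=1}^{f} (A ⊙ (J_n · diag(z)))·H[:,i]·W[i,:] = A · diag(z) · H · W. Hence choosing all GDC channel masks equal to J_n·diag(z) recovers the node-sampling (FastGCN) layer, so node sampling is a special case of GDC. -/
open Matrix BigOperators

/-- The `i`-th column of a matrix, as an `n × 1` matrix. -/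
def colM {n f : ℕ} (H : Matrix (Fin n) (Fin f) ℝ) (i : Fin f) :
    Matrix (Fin n) (Fin 1) ℝ := fun v _ => H v i

/-- The `i`-th row of a matrix, as a `1 × g` matrix. -/
def rowM {f g : ℕ} (W : Matrix (Fin f) (Fin g) ℝ) (i : Fin f) :
    Matrix (Fin 1) (Fin g) ℝ := fun _ j => W i j

/-- The `n × n` all-ones matrix. -/
def allOnes (n : ℕ) : Matrix (Fin n) (Fin n) ℝ := fun _ _ => 1

section Semiring

variable {l m n p R : Type*}

theorem hadamard_mul_diagonal [NonUnitalSemiring R] [Fintype m] [DecidableEq m]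
    (A B : Matrix l m R) (z : m → R) : A ⊙ (B * diagonal z) = (A ⊙ B) * diagonal z := by
  ext u v
  simp only [hadamard_apply, mul_diagonal, mul_assoc]

theorem hadamard_of_one_mul_diagonal [Semiring R] [Fintype m] [DecidableEq m]
    (A : Matrix l m R) (z : m → R) : A ⊙ ((of 1 : Matrix l m R) * diagonal z) = A * diagonal z := by
  rw [hadamard_mul_diagonal, hadamard_of_one]

theorem sum_vecMulVec_col_row [NonUnitalNonAssocSemiring R] [Fintype m]
    (H : Matrix l m R) (W : Matrix m n R) : ∑ i, vecMulVec (H.col i) (W.row i) = H * W := by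
  ext u v
  simp only [Matrix.sum_apply, vecMulVec_apply, col_apply, row_apply, mul_apply]

/-- The unnormalized Graph DropConnect pre-activation, in which channel `i` propagates along `A`
masked by `Z i`. The product `H[:,i] · W[i,:]` is encoded as an outer product of vectors, and `A`
may be rectangular. -/
def gdcPreactivation [NonUnitalNonAssocSemiring R] [Fintype m] [Fintype n]
    (A : Matrix l m R) (Z : n → Matrix l m R) (H : Matrix m n R) (W : Matrix n p R) :
    Matrix l p R :=
  ∑ i, (A ⊙ Z i) * vecMulVec (H.col i) (W.row i)

theorem gdcPreactivation_const [NonUnitalSemiring R] [Fintype m] [Fintype n]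
    (A Z : Matrix l m R) (H : Matrix m n R) (W : Matrix n p R) :
    gdcPreactivation A (fun _ => Z) H W = (A ⊙ Z) * H * W := by
  rw [gdcPreactivation, ← Matrix.mul_sum, sum_vecMulVec_col_row, Matrix.mul_assoc]

theorem gdc_recovers_node_sampling_general [Semiring R] [Fintype m] [DecidableEq m] [Fintype n]
    (A : Matrix l m R) (z : m → R) (H : Matrix m n R) (W : Matrix n p R) :
    A ⊙ ((of 1 : Matrix l m R) * diagonal z) = A * diagonal z ∧
      gdcPreactivation A (fun _ => (of 1 : Matrix l m R) * diagonal z) H W =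
        A * diagonal z * H * W :=
  ⟨hadamard_of_one_mul_diagonal A z, by
    rw [gdcPreactivation_const, hadamard_of_one_mul_diagonal]⟩

end Semiring

theorem colM_mul_rowM {n f g : ℕ} (H : Matrix (Fin n) (Fin f) ℝ) (W : Matrix (Fin f) (Fin g) ℝ)
    (i : Fin f) : colM H i * rowM W i = vecMulVec (H.col i) (W.row i) :=
  (vecMulVec_eq (Fin 1) (H.col i) (W.row i)).symm

theorem allOnes_eq_of_one (n : ℕ) : allOnes n = of 1 :=
  rfl

/-- `A ⊙ (Jₙ ⬝ diag z) = A ⬝ diag z`, and consequently choosing all GDC channel masks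
equal to `Jₙ ⬝ diag z` recovers the node-sampling (FastGCN) layer `A ⬝ diag z ⬝ H ⬝ W`,
so node sampling is a special case of GDC. -/
theorem gdc_recovers_node_sampling (n f g : ℕ) (hn : 0 < n) (hf : 0 < f) (hg : 0 < g)
    (A : Matrix (Fin n) (Fin n) ℝ) (z : Fin n → ℝ) (H : Matrix (Fin n) (Fin f) ℝ)
    (W : Matrix (Fin f) (Fin g) ℝ) :
    (A ⊙ (allOnes n * Matrix.diagonal z) = A * Matrix.diagonal z) ∧
    (∑ i : Fin f, (A ⊙ (allOnes n * Matrix.diagonal z)) * (colM H i * rowM W i)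
      = A * Matrix.diagonal z * H * W) := by
  simpa only [colM_mul_rowM, allOnes_eq_of_one, gdcPreactivation] using
    gdc_recovers_node_sampling_general A z H W
end

section
/- For all real a > 0 and b > 0, letting q(x) = a·b·x^{a−1}·(1 − x^a)^{b−1} denote the Kumaraswamy(a,b) density, ∫₀¹ q(x)·log q(x) dx = log(a·b) − ((a−1)/a)·(γ + ψ(b) + 1/b) − (b−1)/b, where γ is the Euler–Mascheroni constant and ψ(b) is the derivative of log Γ at b. Equivalently, the differential entropy of the Kumaraswamy(a,b) distribution equals −log(a·b) + ((a−1)/a)·(γ + ψ(b) + 1/b) + (b−1)/b. -/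
open Real

/-- The digamma function `ψ`, the derivative of `log ∘ Γ`. -/
noncomputable def digamma (x : ℝ) : ℝ := deriv (fun y => Real.log (Real.Gamma y)) x

/-- The Kumaraswamy(a, b) density `q`. -/
noncomputable def kumaraswamyPdf (a b x : ℝ) : ℝ :=
  a * b * x ^ (a - 1) * (1 - x ^ a) ^ (b - 1)

/-!
If `X` has the Kumaraswamy(a, b) density `q`, then `T = X ^ a` has the Beta(1, b) law, and
`log q(X) = log (ab) + ((a - 1) / a) log T + (b - 1) log (1 - T)`. The two expectations come from
differentiating `∫₀¹ t ^ (u - 1) (1 - t) ^ (v - 1) dt = Γ(u) Γ(v) / Γ(u + v)` in `u`, which gives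
`E[log T] = ψ(u) - ψ(u + v)` under Beta(u, v), and from the symmetry `T ↦ 1 - T` exchanging
the two parameters.
-/

open MeasureTheory ProbabilityTheory Set Filter Topology

section Digamma

variable {x : ℝ}

theorem digamma_eq_logDeriv_Gamma (hx : ∀ m : ℕ, x ≠ -m) : digamma x = logDeriv Gamma x :=
  ((differentiableAt_Gamma hx).hasDerivAt.log (Gamma_ne_zero hx)).deriv

theorem hasDerivAt_Gamma (hx : ∀ m : ℕ, x ≠ -m) :
    HasDerivAt Gamma (Gamma x * digamma x) x := by
  rw [digamma_eq_logDeriv_Gamma hx, logDeriv_apply, mul_div_cancel₀ _ (Gamma_ne_zero hx)]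
  exact (differentiableAt_Gamma hx).hasDerivAt

theorem ne_neg_natCast_of_pos (hx : 0 < x) (m : ℕ) : x ≠ -m :=
  ((neg_nonpos.2 m.cast_nonneg).trans_lt hx).ne'

theorem digamma_one : digamma 1 = -eulerMascheroniConstant := by
  rw [digamma_eq_logDeriv_Gamma (ne_neg_natCast_of_pos one_pos), logDeriv_apply,
    hasDerivAt_Gamma_one.deriv, Gamma_one, div_one]

theorem digamma_add_one (hx : ∀ m : ℕ, x ≠ -m) : digamma (x + 1) = digamma x + 1 / x := by
  have hx₀ : x ≠ 0 := by simpa using hx 0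
  have hdiff := differentiableAt_Gamma hx
  have hlog : (fun y => log (Gamma (y + 1))) =ᶠ[𝓝 x] fun y => log y + log (Gamma y) := by
    filter_upwards [eventually_ne_nhds hx₀, hdiff.continuousAt.eventually_ne (Gamma_ne_zero hx)]
      with y hy hΓ
    rw [Gamma_add_one hy, log_mul hy hΓ]
  calc digamma (x + 1)
      = deriv (fun y => log (Gamma (y + 1))) x :=
        (deriv_comp_add_const (fun y => log (Gamma y)) 1 x).symm
    _ = deriv (fun y => log y + log (Gamma y)) x := hlog.deriv_eq
    _ = digamma x + 1 / x := by
      rw [deriv_fun_add (differentiableAt_log hx₀) (hdiff.log (Gamma_ne_zero hx)), deriv_log,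
        add_comm, one_div, digamma]

end Digamma

theorem abs_log_mul_rpow_le {t p q : ℝ} (ht₀ : 0 < t) (ht₁ : t ≤ 1) (hqp : q < p) :
    |log t| * t ^ p ≤ (p - q)⁻¹ * t ^ q := by
  have h := (abs_log_mul_self_rpow_lt t (p - q) ht₀ ht₁ (sub_pos.2 hqp)).le
  rw [abs_mul, abs_of_pos (rpow_pos_of_pos ht₀ _), one_div] at h
  calc |log t| * t ^ p = |log t| * t ^ (p - q) * t ^ q := by
        rw [mul_assoc, ← rpow_add ht₀, sub_add_cancel]
    _ ≤ (p - q)⁻¹ * t ^ q := by gcongr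

theorem measurePreserving_withDensity_comp {X Y : Type*} [MeasurableSpace X] [MeasurableSpace Y]
    {μ : Measure X} {ν : Measure Y} {f : X → Y} (hf : MeasurePreserving f μ ν)
    {h : Y → ENNReal} (hh : Measurable h) :
    MeasurePreserving f (μ.withDensity (h ∘ f)) (ν.withDensity h) := by
  refine ⟨hf.measurable, Measure.ext fun s hs => ?_⟩
  rw [Measure.map_apply hf.measurable hs, withDensity_apply _ (hf.measurable hs),
    withDensity_apply _ hs]
  exact hf.setLIntegral_comp_preimage hs hh

theorem integral_comp_rpow {E : Type*} [NormedAddCommGroup E] [NormedSpace ℝ E] {p c : ℝ}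
    (hp : 0 < p) (hc : 0 ≤ c) (g : ℝ → E) :
    ∫ x in 0..c, (p * x ^ (p - 1)) • g (x ^ p) = ∫ y in 0..c ^ p, g y := by
  have hind : ∀ x ∈ Ioi (0 : ℝ), (p * x ^ (p - 1)) • (Iic (c ^ p)).indicator g (x ^ p) =
      (Iic c).indicator (fun x => (p * x ^ (p - 1)) • g (x ^ p)) x := fun x hx => by
    simp [indicator_apply, rpow_le_rpow_iff (le_of_lt hx) hc hp]
  have h := integral_comp_rpow_Ioi_of_pos (g := (Iic (c ^ p)).indicator g) hp
  rwa [setIntegral_congr_fun measurableSet_Ioi hind, setIntegral_indicator measurableSet_Iic,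
    setIntegral_indicator measurableSet_Iic, Ioi_inter_Iic, Ioi_inter_Iic,
    ← intervalIntegral.integral_of_le hc, ← intervalIntegral.integral_of_le (by positivity)] at h

section BetaMeasure

variable {E : Type*} [NormedAddCommGroup E] [NormedSpace ℝ E] {u v : ℝ}

theorem betaMeasure_eq_withDensity_restrict (u v : ℝ) :
    betaMeasure u v = (volume.restrict (Ioo 0 1)).withDensity (betaPDF u v) := by
  rw [← withDensity_indicator measurableSet_Ioo, indicator_eq_self.2, betaMeasure]
  intro t ht
  by_contra hmem
  exact ht (by simp [betaPDF_eq, show ¬(0 < t ∧ t < 1) from hmem])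

theorem toReal_betaPDF (hu : 0 < u) (hv : 0 < v) {t : ℝ} (ht : t ∈ Ioo 0 1) :
    (betaPDF u v t).toReal = (beta u v)⁻¹ * (t ^ (u - 1) * (1 - t) ^ (v - 1)) := by
  rw [betaPDF, ENNReal.toReal_ofReal (betaPDFReal_pos ht.1 ht.2 hu hv).le, betaPDFReal,
    if_pos (mem_Ioo.1 ht), one_div, mul_assoc]

theorem measurable_betaPDF (u v : ℝ) : Measurable (betaPDF u v) :=
  (measurable_betaPDFReal u v).ennreal_ofReal

theorem ae_betaPDF_lt_top (u v : ℝ) (μ : Measure ℝ) : ∀ᵐ t ∂μ, betaPDF u v t < ⊤ :=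
  .of_forall fun _ => ENNReal.ofReal_lt_top

theorem integral_betaMeasure (hu : 0 < u) (hv : 0 < v) (f : ℝ → E) :
    ∫ t, f t ∂betaMeasure u v =
      (beta u v)⁻¹ • ∫ t in Ioo 0 1, (t ^ (u - 1) * (1 - t) ^ (v - 1)) • f t := by
  rw [betaMeasure_eq_withDensity_restrict,
    integral_withDensity_eq_integral_toReal_smul (measurable_betaPDF u v)
      (ae_betaPDF_lt_top u v _), ← integral_smul]
  exact setIntegral_congr_fun measurableSet_Ioo fun t ht => by
    simp only [toReal_betaPDF hu hv ht, mul_smul]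

theorem integrable_betaMeasure_iff (hu : 0 < u) (hv : 0 < v) {f : ℝ → E} :
    Integrable f (betaMeasure u v) ↔
      IntegrableOn (fun t => (t ^ (u - 1) * (1 - t) ^ (v - 1)) • f t) (Ioo 0 1) := by
  rw [betaMeasure_eq_withDensity_restrict,
    integrable_withDensity_iff_integrable_smul' (measurable_betaPDF u v)
      (ae_betaPDF_lt_top u v _), ← IntegrableOn,
    integrableOn_congr_fun (fun t ht => by rw [toReal_betaPDF hu hv ht, mul_smul])
      measurableSet_Ioo]
  exact integrable_fun_smul_iff (inv_ne_zero (beta_pos hu hv).ne') _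

theorem integrableOn_rpow_mul_one_sub_rpow (hu : 0 < u) (hv : 0 < v) :
    IntegrableOn (fun t : ℝ => t ^ (u - 1) * (1 - t) ^ (v - 1)) (Ioo 0 1) := by
  have := isProbabilityMeasureBeta hu hv
  simpa using (integrable_betaMeasure_iff hu hv).1 (integrable_const (1 : ℝ))

theorem setIntegral_rpow_mul_one_sub_rpow (hu : 0 < u) (hv : 0 < v) :
    ∫ t in Ioo (0 : ℝ) 1, t ^ (u - 1) * (1 - t) ^ (v - 1) = beta u v := by
  have := isProbabilityMeasureBeta hu hv
  have h := integral_betaMeasure hu hv fun _ => (1 : ℝ)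
  simp only [integral_const, probReal_univ, smul_eq_mul, mul_one] at h
  rwa [eq_inv_mul_iff_mul_eq₀ (beta_pos hu hv).ne', mul_one, eq_comm] at h

theorem integrable_log_betaMeasure (hu : 0 < u) (hv : 0 < v) :
    Integrable log (betaMeasure u v) := by
  rw [integrable_betaMeasure_iff hu hv]
  refine ((integrableOn_rpow_mul_one_sub_rpow (half_pos hu) hv).const_mul (u / 2)⁻¹).mono'
    (by fun_prop) ?_
  filter_upwards [ae_restrict_mem measurableSet_Ioo] with t ⟨ht₀, ht₁⟩
  have hlog := abs_log_mul_rpow_le ht₀ ht₁.le (show u / 2 - 1 < u - 1 by linarith)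
  have hpos : 0 < (1 - t) ^ (v - 1) := rpow_pos_of_pos (sub_pos.2 ht₁) _
  rw [sub_sub_sub_cancel_right, sub_half] at hlog
  calc ‖(t ^ (u - 1) * (1 - t) ^ (v - 1)) • log t‖
      = |log t| * t ^ (u - 1) * (1 - t) ^ (v - 1) := by
        rw [norm_smul, norm_of_nonneg (by positivity), norm_eq_abs]
        ring
    _ ≤ (u / 2)⁻¹ * t ^ (u / 2 - 1) * (1 - t) ^ (v - 1) := by gcongr
    _ = (u / 2)⁻¹ * (t ^ (u / 2 - 1) * (1 - t) ^ (v - 1)) := mul_assoc ..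

theorem hasDerivAt_setIntegral_rpow_mul_one_sub_rpow (hu : 0 < u) (hv : 0 < v) :
    HasDerivAt (fun s => ∫ t in Ioo (0 : ℝ) 1, t ^ (s - 1) * (1 - t) ^ (v - 1))
      (∫ t in Ioo (0 : ℝ) 1, t ^ (u - 1) * (1 - t) ^ (v - 1) * log t) u := by
  have hbound : ∀ᵐ t ∂volume.restrict (Ioo (0 : ℝ) 1), ∀ s ∈ Ioi (u / 2),
      ‖t ^ (s - 1) * (1 - t) ^ (v - 1) * log t‖ ≤
        ‖t ^ (u / 2 - 1) * (1 - t) ^ (v - 1) * log t‖ := by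
    filter_upwards [ae_restrict_mem measurableSet_Ioo] with t ⟨ht₀, ht₁⟩ s hs
    simp only [norm_mul, norm_of_nonneg (rpow_nonneg ht₀.le _)]
    gcongr ?_ * _ * _
    exact rpow_le_rpow_of_exponent_ge ht₀ ht₁.le (sub_le_sub_right (le_of_lt hs) 1)
  have hderiv : ∀ᵐ t ∂volume.restrict (Ioo (0 : ℝ) 1), ∀ s ∈ Ioi (u / 2),
      HasDerivAt (fun s => t ^ (s - 1) * (1 - t) ^ (v - 1))
        (t ^ (s - 1) * (1 - t) ^ (v - 1) * log t) s := by
    filter_upwards [ae_restrict_mem measurableSet_Ioo] with t ⟨ht₀, _⟩ s _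
    refine ((((hasDerivAt_id' s).sub_const 1).const_rpow ht₀).mul_const _).congr_deriv ?_
    ring
  have hint := (integrable_betaMeasure_iff (half_pos hu) hv).1
    (integrable_log_betaMeasure (half_pos hu) hv)
  exact (hasDerivAt_integral_of_dominated_loc_of_deriv_le (μ := volume.restrict (Ioo 0 1))
    (F := fun s t => t ^ (s - 1) * (1 - t) ^ (v - 1)) (Ioi_mem_nhds (half_lt_self hu))
    (.of_forall fun s => by fun_prop) (integrableOn_rpow_mul_one_sub_rpow hu hv) (by fun_prop)
    hbound hint.norm hderiv).2

theorem hasDerivAt_beta_left (hu : ∀ m : ℕ, u ≠ -m) (huv : ∀ m : ℕ, u + v ≠ -m) :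
    HasDerivAt (fun s => beta s v) (beta u v * (digamma u - digamma (u + v))) u := by
  have hΓ : Gamma (u + v) ≠ 0 := Gamma_ne_zero huv
  refine (((hasDerivAt_Gamma hu).mul_const (Gamma v)).fun_div
    ((hasDerivAt_Gamma huv).comp_add_const u v) hΓ).congr_deriv ?_
  rw [beta]
  field_simp

theorem integral_log_betaMeasure (hu : 0 < u) (hv : 0 < v) :
    ∫ t, log t ∂betaMeasure u v = digamma u - digamma (u + v) := by
  have hbeta : (fun s => ∫ t in Ioo (0 : ℝ) 1, t ^ (s - 1) * (1 - t) ^ (v - 1)) =ᶠ[𝓝 u]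
      fun s => beta s v := by
    filter_upwards [Ioi_mem_nhds hu] with s hs using setIntegral_rpow_mul_one_sub_rpow hs hv
  have hderiv := (hasDerivAt_setIntegral_rpow_mul_one_sub_rpow hu hv).unique
    ((hasDerivAt_beta_left (ne_neg_natCast_of_pos hu)
      (ne_neg_natCast_of_pos (add_pos hu hv))).congr_of_eventuallyEq hbeta)
  rw [integral_betaMeasure hu hv]
  simp only [smul_eq_mul]
  rw [hderiv, inv_mul_cancel_left₀ (beta_pos hu hv).ne']

theorem measurePreserving_one_sub_betaMeasure (u v : ℝ) :
    MeasurePreserving (fun t => 1 - t) (betaMeasure u v) (betaMeasure v u) := by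
  have hsymm : betaPDF u v = betaPDF v u ∘ fun t => 1 - t := by
    ext t
    have hmem : (0 < 1 - t ∧ 1 - t < 1) ↔ 0 < t ∧ t < 1 := by grind
    simp only [Function.comp_apply, betaPDF_eq, hmem, sub_sub_cancel, beta, add_comm u v,
      mul_comm (Gamma u), mul_right_comm]
  rw [betaMeasure, hsymm]
  exact measurePreserving_withDensity_comp (volume.measurePreserving_sub_left 1)
    (measurable_betaPDF v u)

theorem integrable_log_one_sub_betaMeasure (hu : 0 < u) (hv : 0 < v) :
    Integrable (fun t => log (1 - t)) (betaMeasure u v) :=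
  (measurePreserving_one_sub_betaMeasure u v).integrable_comp_of_integrable (g := log)
    (integrable_log_betaMeasure hv hu)

theorem integral_log_one_sub_betaMeasure (hu : 0 < u) (hv : 0 < v) :
    ∫ t, log (1 - t) ∂betaMeasure u v = digamma v - digamma (u + v) := by
  rw [(measurePreserving_one_sub_betaMeasure u v).integral_comp
    (Homeomorph.subLeft (1 : ℝ)).measurableEmbedding log, integral_log_betaMeasure hv hu, add_comm]

end BetaMeasure

section Kumaraswamy

variable {a b : ℝ}

theorem integral_kumaraswamyPdf_smul_comp_rpow {E : Type*} [NormedAddCommGroup E]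
    [NormedSpace ℝ E] (ha : 0 < a) (hb : 0 < b) (g : ℝ → E) :
    ∫ x in 0..1, kumaraswamyPdf a b x • g (x ^ a) = ∫ t, g t ∂betaMeasure 1 b := by
  have hΓ : Gamma b ≠ 0 := (Gamma_pos_of_pos hb).ne'
  have hbeta : (beta 1 b)⁻¹ = b := by
    rw [beta, add_comm, Gamma_add_one hb.ne', Gamma_one]
    field_simp
  calc ∫ x in 0..1, kumaraswamyPdf a b x • g (x ^ a)
      = ∫ x in 0..1, (a * x ^ (a - 1)) • (b * (1 - x ^ a) ^ (b - 1)) • g (x ^ a) := by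
        simp only [kumaraswamyPdf, smul_smul]
        congr! 3
        ring
    _ = ∫ t in 0..1, (b * (1 - t) ^ (b - 1)) • g t := by
        rw [integral_comp_rpow ha zero_le_one fun t => (b * (1 - t) ^ (b - 1)) • g t, one_rpow]
    _ = ∫ t, g t ∂betaMeasure 1 b := by
        simp only [integral_betaMeasure one_pos hb, hbeta, mul_smul, integral_smul,
          intervalIntegral.integral_of_le zero_le_one, integral_Ioc_eq_integral_Ioo, sub_self,
          rpow_zero, one_smul]

theorem log_kumaraswamyPdf (ha : 0 < a) (hb : 0 < b) {x : ℝ} (hx : x ∈ Ioo 0 1) :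
    log (kumaraswamyPdf a b x) =
      log (a * b) + (a - 1) / a * log (x ^ a) + (b - 1) * log (1 - x ^ a) := by
  have hxa : 0 < 1 - x ^ a := sub_pos.2 (rpow_lt_one hx.1.le hx.2 ha)
  have hx₁ : 0 < x ^ (a - 1) := rpow_pos_of_pos hx.1 _
  rw [kumaraswamyPdf, log_mul (by positivity) (by positivity), log_mul (by positivity) hx₁.ne',
    log_rpow hx.1, log_rpow hxa, log_rpow hx.1, ← mul_assoc, div_mul_cancel₀ _ ha.ne']

theorem integral_kumaraswamyPdf_mul_log (ha : 0 < a) (hb : 0 < b) :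
    ∫ x in 0..1, kumaraswamyPdf a b x * log (kumaraswamyPdf a b x) =
      log (a * b) + (a - 1) / a * (digamma 1 - digamma (1 + b))
        + (b - 1) * (digamma b - digamma (1 + b)) := by
  have := isProbabilityMeasureBeta one_pos hb
  have hlog := (integrable_log_betaMeasure one_pos hb).const_mul ((a - 1) / a)
  have hlog_one_sub := (integrable_log_one_sub_betaMeasure one_pos hb).const_mul (b - 1)
  calc ∫ x in 0..1, kumaraswamyPdf a b x * log (kumaraswamyPdf a b x)
      = ∫ x in 0..1, kumaraswamyPdf a b x •
          (log (a * b) + (a - 1) / a * log (x ^ a) + (b - 1) * log (1 - x ^ a)) :=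
        intervalIntegral.integral_congr_Ioo_of_le zero_le_one fun x hx => by
          simp only [log_kumaraswamyPdf ha hb hx, smul_eq_mul]
    _ = ∫ t, log (a * b) + (a - 1) / a * log t + (b - 1) * log (1 - t) ∂betaMeasure 1 b :=
        integral_kumaraswamyPdf_smul_comp_rpow ha hb fun t =>
          log (a * b) + (a - 1) / a * log t + (b - 1) * log (1 - t)
    _ = log (a * b) + (a - 1) / a * (digamma 1 - digamma (1 + b))
          + (b - 1) * (digamma b - digamma (1 + b)) := by
        rw [integral_add ((integrable_const _).fun_add hlog) hlog_one_sub,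
          integral_add (integrable_const _) hlog, integral_const_mul, integral_const_mul,
          integral_log_betaMeasure one_pos hb, integral_log_one_sub_betaMeasure one_pos hb,
          integral_const, probReal_univ, one_smul]

end Kumaraswamy

/-- Negative differential entropy of the Kumaraswamy(a, b) distribution:
`∫₀¹ q log q = log(ab) - ((a-1)/a)(γ + ψ(b) + 1/b) - (b-1)/b`; equivalently,
the differential entropy `-∫₀¹ q log q` equals
`-log(ab) + ((a-1)/a)(γ + ψ(b) + 1/b) + (b-1)/b`. -/
theorem kumaraswamy_entropy (a b : ℝ) (ha : 0 < a) (hb : 0 < b) :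
    (∫ x in (0:ℝ)..1, kumaraswamyPdf a b x * Real.log (kumaraswamyPdf a b x)
      = Real.log (a * b)
        - ((a - 1)/a) * (Real.eulerMascheroniConstant + digamma b + 1/b)
        - (b - 1)/b) ∧
    (-∫ x in (0:ℝ)..1, kumaraswamyPdf a b x * Real.log (kumaraswamyPdf a b x)
      = -Real.log (a * b)
        + ((a - 1)/a) * (Real.eulerMascheroniConstant + digamma b + 1/b)
        + (b - 1)/b) := by
  have h := integral_kumaraswamyPdf_mul_log ha hb
  rw [add_comm 1 b, digamma_add_one (ne_neg_natCast_of_pos hb), digamma_one] at h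
  rw [h]
  constructor <;> ring
end
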